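/- Let n ≥ 1, let B be the Minkowski bilinear form on ℝ^{1+n}, B(x,y) = x₀y₀ − Σ_{i=1}^{n} x_i y_i, with quadratic form q, and let q_ℂ denote the quadratic form on ℂ^{1+n} extending q ℂ-bilinearly, q_ℂ(v) = v₀² − Σ_{i=1}^{n} v_i². Suppose w ∈ ℝ^{1+n} satisfies q(w) > 0 (w is time-like). Then for every ϖ ∈ ℝ^{1+n} and every z ∈ ℂ with Im z ≠ 0 one has q_ℂ(ϖ + z·w) ≠ 0. -/

import Mathlib

/-!
Along the line `ϖ + t w` a real quadratic form `Q` is a quadratic polynomial in `t` with real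
coefficients, and the complexification of `Q` at `ϖ + z w` is the same polynomial evaluated at `z`.
If `Q` is nonpositive on a hyperplane and positive at `w`, the line meets the hyperplane, so the
polynomial has positive leading coefficient and takes a nonpositive value. Its discriminant is
therefore nonnegative, and all its complex roots are real.
-/

open QuadraticMap (polar weightedSumSquares weightedSumSquares_apply)
open scoped TensorProduct

theorem discrim_nonneg_of_quadratic_nonpos {R : Type*} [CommRing R] [LinearOrder R]
    [IsStrictOrderedRing R] {a b c t : R} (ha : 0 ≤ a) (ht : a * (t * t) + b * t + c ≤ 0) :
    0 ≤ discrim a b c := by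
  have complete_square :
      discrim a b c = (2 * a * t + b) ^ 2 - 4 * (a * (a * (t * t) + b * t + c)) := by
    rw [discrim]
    ring
  have := mul_nonpos_of_nonneg_of_nonpos ha ht
  linarith [sq_nonneg (2 * a * t + b)]

theorem im_eq_zero_of_quadratic_eq_zero {a b c : ℝ} (ha : a ≠ 0)
    (hdiscrim : 0 ≤ discrim a b c) {z : ℂ} (hz : (a : ℂ) * (z * z) + b * z + c = 0) :
    z.im = 0 := by
  have hsqrt : discrim (a : ℂ) b c = (√(discrim a b c) : ℂ) * √(discrim a b c) := by
    rw [← Complex.ofReal_mul, Real.mul_self_sqrt hdiscrim]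
    simp [discrim]
  rcases (quadratic_eq_zero_iff (Complex.ofReal_ne_zero.mpr ha) hsqrt z).mp hz with rfl | rfl
  · exact_mod_cast Complex.ofReal_im ((-b + √(discrim a b c)) / (2 * a))
  · exact_mod_cast Complex.ofReal_im ((-b - √(discrim a b c)) / (2 * a))

theorem exists_map_add_smul_eq_zero {K V : Type*} [Field K] [AddCommGroup V] [Module K V]
    (l : V →ₗ[K] K) {w : V} (hw : l w ≠ 0) (v : V) : ∃ t : K, l (v + t • w) = 0 :=
  ⟨-l v / l w, by simp [hw]⟩

section QuadraticForm

variable {R M : Type*} [CommRing R] [AddCommGroup M] [Module R M]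

theorem quadraticForm_apply_add_smul (Q : QuadraticForm R M) (x y : M) (t : R) :
    Q (x + t • y) = Q y * (t * t) + polar Q x y * t + Q x := by
  rw [QuadraticMap.map_add Q, QuadraticMap.map_smul, QuadraticMap.polar_smul_right,
    smul_eq_mul, smul_eq_mul]
  ring

variable [Invertible (2 : R)] {A : Type*} [CommRing A] [Algebra R A]

theorem polar_quadraticForm_baseChange_one_tmul (Q : QuadraticForm R M) (x y : M) :
    polar (Q.baseChange A) (1 ⊗ₜ x) (1 ⊗ₜ y) = algebraMap R A (polar Q x y) := by
  simp only [polar, ← TensorProduct.tmul_add, QuadraticForm.baseChange_tmul, mul_one,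
    Algebra.algebraMap_eq_smul_one, sub_smul]

theorem quadraticForm_baseChange_one_tmul_add_tmul (Q : QuadraticForm R M) (x y : M) (a : A) :
    Q.baseChange A (1 ⊗ₜ x + a ⊗ₜ y) =
      algebraMap R A (Q y) * (a * a) + algebraMap R A (polar Q x y) * a + algebraMap R A (Q x) := by
  have tmul_eq_smul : a ⊗ₜ[R] y = a • (1 ⊗ₜ[R] y) := by
    rw [TensorProduct.smul_tmul', smul_eq_mul, mul_one]
  rw [tmul_eq_smul, quadraticForm_apply_add_smul, polar_quadraticForm_baseChange_one_tmul]
  simp only [QuadraticForm.baseChange_tmul, mul_one, Algebra.algebraMap_eq_smul_one]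

theorem weightedSumSquares_baseChange_one_tmul_add_tmul {ι : Type*} [Fintype ι]
    (c x y : ι → R) (a : A) :
    QuadraticForm.baseChange A (weightedSumSquares R c) (1 ⊗ₜ x + a ⊗ₜ y) =
      ∑ i, algebraMap R A (c i) * (algebraMap R A (x i) + a * algebraMap R A (y i)) ^ 2 := by
  rw [quadraticForm_baseChange_one_tmul_add_tmul]
  simp only [polar, weightedSumSquares_apply, Pi.add_apply, smul_eq_mul,
    ← Finset.sum_sub_distrib, map_sum, Finset.sum_mul, ← Finset.sum_add_distrib]
  refine Finset.sum_congr rfl fun i _ ↦ ?_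
  simp only [map_sub, map_mul, map_add]
  ring

end QuadraticForm

section Minkowski

/-- The Minkowski quadratic form `x₀² - x₁² - ⋯ - xₙ²` on `ℝ^{1+n}`, encoded as the sum of squares
with weights `(1, -1, …, -1)`; the time coordinate has index `0`. -/
noncomputable def minkowskiForm (n : ℕ) : QuadraticForm ℝ (Fin (n + 1) → ℝ) :=
  weightedSumSquares ℝ (Fin.cons 1 fun _ ↦ -1 : Fin (n + 1) → ℝ)

variable {n : ℕ}

theorem minkowskiForm_apply (v : Fin (n + 1) → ℝ) :
    minkowskiForm n v = v 0 ^ 2 - ∑ i : Fin n, v i.succ ^ 2 := by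
  simp [minkowskiForm, Fin.sum_univ_succ, sq, sub_eq_add_neg]

theorem minkowskiForm_nonpos_of_apply_zero_eq_zero {v : Fin (n + 1) → ℝ} (hv : v 0 = 0) :
    minkowskiForm n v ≤ 0 := by
  have : 0 ≤ ∑ i : Fin n, v i.succ ^ 2 := Finset.sum_nonneg fun i _ ↦ sq_nonneg _
  rw [minkowskiForm_apply, hv]
  linarith

theorem minkowskiForm_baseChange_one_tmul_add_tmul (x y : Fin (n + 1) → ℝ) (z : ℂ) :
    (minkowskiForm n).baseChange ℂ (1 ⊗ₜ x + z ⊗ₜ y) =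
      ((x 0 : ℂ) + z * (y 0 : ℂ)) ^ 2
        - ∑ i : Fin n, ((x i.succ : ℂ) + z * (y i.succ : ℂ)) ^ 2 := by
  rw [minkowskiForm, weightedSumSquares_baseChange_one_tmul_add_tmul]
  simp [Fin.sum_univ_succ, sub_eq_add_neg]

end Minkowski

theorem minkowski_complex_quadratic_ne_zero_general {V : Type*} [AddCommGroup V] [Module ℝ V]
    (Q : QuadraticForm ℝ V) (l : V →ₗ[ℝ] ℝ) (hQ : ∀ v, l v = 0 → Q v ≤ 0)
    {w : V} (hw : 0 < Q w) (ϖ : V) {z : ℂ} (hz : z.im ≠ 0) :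
    Q.baseChange ℂ (1 ⊗ₜ ϖ + z ⊗ₜ w) ≠ 0 := by
  have hlw : l w ≠ 0 := fun h ↦ (hQ w h).not_gt hw
  obtain ⟨t, ht⟩ := exists_map_add_smul_eq_zero l hlw ϖ
  have hnonpos : Q w * (t * t) + polar Q ϖ w * t + Q ϖ ≤ 0 :=
    quadraticForm_apply_add_smul Q ϖ w t ▸ hQ _ ht
  have hdiscrim : 0 ≤ discrim (Q w) (polar Q ϖ w) (Q ϖ) :=
    discrim_nonneg_of_quadratic_nonpos hw.le hnonpos
  rw [quadraticForm_baseChange_one_tmul_add_tmul]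
  exact fun hroot ↦ hz (im_eq_zero_of_quadratic_eq_zero hw.ne' hdiscrim hroot)

/-- **Semiclassical ellipticity off the real axis** (Subsection 3.2 of the paper).
If `w ∈ ℝ^{1+n}` is time-like for the Minkowski quadratic form, then for every real
covector `ϖ` and every `z ∈ ℂ` with `Im z ≠ 0`, the complexified Minkowski quadratic
form does not vanish on `ϖ + z·w`. -/
theorem minkowski_complex_quadratic_ne_zero (n : ℕ) (hn : 1 ≤ n)
    (w : Fin (n + 1) → ℝ)
    (hw : 0 < w 0 ^ 2 - ∑ i : Fin n, w i.succ ^ 2)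
    (ϖ : Fin (n + 1) → ℝ) (z : ℂ) (hz : z.im ≠ 0) :
    ((ϖ 0 : ℂ) + z * (w 0 : ℂ)) ^ 2
      - ∑ i : Fin n, ((ϖ i.succ : ℂ) + z * (w i.succ : ℂ)) ^ 2 ≠ 0 := by
  rw [← minkowskiForm_apply] at hw
  rw [← minkowskiForm_baseChange_one_tmul_add_tmul]
  exact minkowski_complex_quadratic_ne_zero_general _ (LinearMap.proj 0)
    (fun _ ↦ minkowskiForm_nonpos_of_apply_zero_eq_zero) hw ϖ hz
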